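/- Assume conditions (Cond1) and (CondAttr2): ω₁ < π². Then the union ∪_{t∈ℝ} 𝒜(t) of the sections of the pullback attractor of the multivalued process U generated by problem (Incl) is relatively compact in V^{2r} for every 0 ≤ r < 1. -/

import Mathlib

open MeasureTheory Set

noncomputable section

/-- Lebesgue measure restricted to the spatial interval `(0,1)`. -/
def μ01 : Measure ℝ := volume.restrict (Ioo (0:ℝ) 1)

/-- `H = L²(0,1)`. -/
abbrev Hsp : Type := Lp ℝ 2 μ01

/-- The Heaviside multifunction. -/
def heaviside (s : ℝ) : Set ℝ :=
  if s < 0 then {-1} else if s = 0 then Icc (-1) 1 else {1}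

/-- Condition (Cond1). -/
structure Cond1 (b ω : ℝ → ℝ) (b0 b1 ω0 ω1 : ℝ) : Prop where
  contb : Continuous b
  contω : Continuous ω
  b0pos : 0 < b0
  blb : ∀ t, b0 ≤ b t
  bub : ∀ t, b t ≤ b1
  ω0nonneg : 0 ≤ ω0
  ωlb : ∀ t, ω0 ≤ ω t
  ωub : ∀ t, ω t ≤ ω1

/-- `v ∈ H²(0,1) ∩ H¹₀(0,1)` with (weak) second derivative `w ∈ L²(0,1)`:
`v` has a representative that is continuous on `[0,1]`, vanishes at the boundary,
is differentiable on `(0,1)` and whose derivative is an antiderivative of `w`. -/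
def InDomainA (v w : Hsp) : Prop :=
  ∃ vt : ℝ → ℝ, ContinuousOn vt (Icc 0 1) ∧ vt 0 = 0 ∧ vt 1 = 0 ∧
    (∀ᵐ x ∂μ01, vt x = v x) ∧
    ∃ g : ℝ → ℝ,
      (∀ x ∈ Ioo (0:ℝ) 1, HasDerivAt vt (g x) x) ∧
      ∀ x ∈ Ioo (0:ℝ) 1, ∀ y ∈ Ioo (0:ℝ) 1, g x - g y = ∫ z in y..x, w z

/-- A strong solution of the inclusion on `[τ,∞)`, with explicit data:
`r` is the `L²`-selection, `u'` the time derivative, `uxx` the second spatial derivative. -/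
structure IsStrongSolutionWith (b ω : ℝ → ℝ) (τ : ℝ) (u r u' uxx : ℝ → Hsp) : Prop where
  cont : ContinuousOn u (Ici τ)
  rmem : ∀ T, τ < T → MemLp r 2 (volume.restrict (Ioo τ T))
  sel : ∀ᵐ t ∂(volume.restrict (Ioi τ)), ∀ᵐ x ∂μ01,
      ∃ h ∈ heaviside (u t x), r t x = b t * h + ω t * u t x
  dom : ∀ᵐ t ∂(volume.restrict (Ioi τ)), InDomainA (u t) (uxx t)
  eq : ∀ᵐ t ∂(volume.restrict (Ioi τ)), u' t = r t + uxx t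
  fund : ∀ T1 T2 : ℝ, τ < T1 → T1 < T2 →
      IntervalIntegrable u' volume T1 T2 ∧
      ∀ t ∈ Icc T1 T2, u t = u T1 + ∫ s in T1..t, u' s

/-- A strong solution of the inclusion on `[τ,∞)`. -/
def IsStrongSolution (b ω : ℝ → ℝ) (τ : ℝ) (u : ℝ → Hsp) : Prop :=
  ∃ r u' uxx, IsStrongSolutionWith b ω τ u r u' uxx

/-- The solution is non-negative on `[τ,∞)`. -/
def NonnegOn (u : ℝ → Hsp) (τ : ℝ) : Prop :=
  ∀ t, τ ≤ t → ∀ᵐ x ∂μ01, 0 ≤ u t x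

/-- `v` is positive: it has a continuous representative on `[0,1]`
which is strictly positive on `(0,1)`. -/
def IsPositive (v : Hsp) : Prop :=
  ∃ vt : ℝ → ℝ, ContinuousOn vt (Icc 0 1) ∧ (∀ᵐ x ∂μ01, vt x = v x) ∧
    ∀ x ∈ Ioo (0:ℝ) 1, 0 < vt x


/-- Fourier sine coefficient of `v`. -/
def sinCoeff (v : Hsp) (n : ℕ) : ℝ :=
  ∫ x in (0:ℝ)..1, v x * Real.sin (((n : ℝ) + 1) * Real.pi * x)

/-- `v ∈ V^{2r} = D(A^r)`, characterized through the eigenfunction expansion. -/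
def MemV2r (r : ℝ) (v : Hsp) : Prop :=
  Summable (fun n : ℕ => ((((n : ℝ) + 1) * Real.pi) ^ (4 * r)) * (sinCoeff v n) ^ 2)

/-- The square of the `V^{2r} = D(A^r)` distance between `v` and `w`. -/
def V2rDistSq (r : ℝ) (v w : Hsp) : ENNReal :=
  ∑' n : ℕ, ENNReal.ofReal (((((n : ℝ) + 1) * Real.pi) ^ (4 * r)) * (sinCoeff (v - w) n) ^ 2)

/-- The multivalued process generated by problem (Incl) applied to a set:
`U(t,s,S) = {u(t) : u ∈ 𝒟ₛ(x), x ∈ S}`. -/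
def procU (b ω : ℝ → ℝ) (t s : ℝ) (S : Set Hsp) : Set Hsp :=
  {y | ∃ u : ℝ → Hsp, u s ∈ S ∧ IsStrongSolution b ω s u ∧ y = u t}

/-- A family of sets is pullback attracting for the process. -/
def PullbackAttracting (b ω : ℝ → ℝ) (K : ℝ → Set Hsp) : Prop :=
  ∀ t : ℝ, ∀ B : Set Hsp, Bornology.IsBounded B → ∀ ε > (0:ℝ),
    ∃ S : ℝ, S ≤ t ∧ ∀ s ≤ S, ∀ y ∈ procU b ω t s B, ∃ a ∈ K t, ‖y - a‖ < ε

/-- `{𝒜(t)}` is the compact strictly invariant pullback attractor of the process: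
compact sections, strict invariance, pullback attraction and minimality. -/
structure IsPullbackAttractor (b ω : ℝ → ℝ) (𝒜 : ℝ → Set Hsp) : Prop where
  compact : ∀ t : ℝ, IsCompact (𝒜 t)
  invariant : ∀ t s : ℝ, s ≤ t → procU b ω t s (𝒜 s) = 𝒜 t
  attracting : PullbackAttracting b ω 𝒜
  minimal : ∀ K : ℝ → Set Hsp, (∀ t, IsClosed (K t)) →
    PullbackAttracting b ω K → ∀ t, 𝒜 t ⊆ K t

/-!
On the `n`-th sine mode the inclusion is a scalar linear equation with rate `λₙ = ((n+1)π)²`, forced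
by the `n`-th mode of the selection `r`. Since `2yf - λy² ≤ f²/λ`, its solution satisfies
`aₙ(u t)² ≤ e^{-λₙ(t-T)} aₙ(u T)² + ∫ e^{-λₙ(t-s)} aₙ(r s)²/λₙ ds`. Any weight `wₙ` can be put on
this inequality and summed over `n`, because `r s` lies in `H` with `‖r s‖ ≤ b₁ + ω₁‖u s‖`.

With `wₙ = 1`, Young's inequality and Gronwall's lemma use `ω₁ < π² = λ₀` to produce a ball that
absorbs every bounded set, uniformly in time; minimality puts every section `𝒜 t` inside it.
With `wₙ = λₙ^{2ρ}` and `1/2 ≤ ρ < 1`, the kernel `λₙ^{2ρ-1} e^{-λₙ(t-s)}` is bounded by the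
integrable function `2(t-s)^{1-2ρ}`, so a unit of time maps the ball into a bounded set of `V^{2ρ}`.
By strict invariance every point of `𝒜 t` is the value at time `t` of a solution which has stayed
in the ball, and `V^{2ρ}` embeds compactly into `V^{2r}` for `r < ρ`.
-/

/-! ### Weighted square-summable sequences -/

/-- The squared norm `∑ wₙ xₙ²` of the sequence `x` in the `ℓ²` space with weight `w`, as an
extended non-negative real so that no summability has to be assumed. -/
def weightedSqNorm (w x : ℕ → ℝ) : ENNReal := ∑' n, ENNReal.ofReal (w n * x n ^ 2)

lemma weightedSqNorm_le_iff {w x : ℕ → ℝ} (hw : ∀ n, 0 ≤ w n) {M : ℝ} (hM : 0 ≤ M) :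
    weightedSqNorm w x ≤ ENNReal.ofReal M ↔ ∀ F : Finset ℕ, ∑ n ∈ F, w n * x n ^ 2 ≤ M := by
  have hterm : ∀ n, 0 ≤ w n * x n ^ 2 := fun n => mul_nonneg (hw n) (sq_nonneg _)
  rw [weightedSqNorm, ENNReal.tsum_eq_iSup_sum, iSup_le_iff]
  refine forall_congr' fun F => ?_
  rw [← ENNReal.ofReal_sum_of_nonneg fun n _ => hterm n, ENNReal.ofReal_le_ofReal_iff hM]

lemma summable_of_weightedSqNorm_ne_top {w x : ℕ → ℝ} (hw : ∀ n, 0 ≤ w n)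
    (h : weightedSqNorm w x ≠ ⊤) : Summable fun n => w n * x n ^ 2 :=
  (ENNReal.summable_toReal h).congr fun n =>
    ENNReal.toReal_ofReal (mul_nonneg (hw n) (sq_nonneg _))

lemma weightedSqNorm_mono {w w' : ℕ → ℝ} (hww' : ∀ n, w n ≤ w' n) (x : ℕ → ℝ) :
    weightedSqNorm w x ≤ weightedSqNorm w' x := by
  unfold weightedSqNorm
  gcongr with n
  exact hww' n

lemma weightedSqNorm_sub_le {w : ℕ → ℝ} (hw : ∀ n, 0 ≤ w n) (x y : ℕ → ℝ) :
    weightedSqNorm w (x - y) ≤ 2 * weightedSqNorm w x + 2 * weightedSqNorm w y := by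
  unfold weightedSqNorm
  rw [← ENNReal.tsum_mul_left, ← ENNReal.tsum_mul_left, ← ENNReal.tsum_add]
  refine ENNReal.tsum_le_tsum fun n => ?_
  have hsq : (x n - y n) ^ 2 ≤ 2 * x n ^ 2 + 2 * y n ^ 2 := by
    linarith [sq_nonneg (x n + y n)]
  have h2 : (2 : ENNReal) = ENNReal.ofReal 2 := by simp
  have hwn := hw n
  rw [h2, ← ENNReal.ofReal_mul zero_le_two, ← ENNReal.ofReal_mul zero_le_two,
    ← ENNReal.ofReal_add (by positivity) (by positivity)]
  refine ENNReal.ofReal_le_ofReal ?_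
  calc w n * (x n - y n) ^ 2 ≤ w n * (2 * x n ^ 2 + 2 * y n ^ 2) := by gcongr
    _ = 2 * (w n * x n ^ 2) + 2 * (w n * y n ^ 2) := by ring

lemma weightedSqNorm_le_of_tendsto {w c : ℕ → ℝ} (hw : ∀ n, 0 ≤ w n) {x : ℕ → ℕ → ℝ} {M : ℝ}
    (hM : 0 ≤ M) (hx : ∀ k, weightedSqNorm w (x k) ≤ ENNReal.ofReal M)
    (hlim : ∀ n, Filter.Tendsto (fun k => x k n) Filter.atTop (nhds (c n))) :
    weightedSqNorm w c ≤ ENNReal.ofReal M := by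
  rw [weightedSqNorm_le_iff hw hM]
  intro F
  have hsum : Filter.Tendsto (fun k => ∑ n ∈ F, w n * x k n ^ 2) Filter.atTop
      (nhds (∑ n ∈ F, w n * c n ^ 2)) :=
    tendsto_finsetSum _ fun n _ => ((hlim n).pow 2).const_mul _
  exact le_of_tendsto' hsum fun k => (weightedSqNorm_le_iff hw hM).1 (hx k) F

lemma weightedSqNorm_le_sum_range_add {w W : ℕ → ℝ} {ε : ℝ} (hε : 0 ≤ ε) {N : ℕ}
    (hN : ∀ n, N ≤ n → w n ≤ ε * W n) (x : ℕ → ℝ) :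
    weightedSqNorm w x ≤ ∑ n ∈ Finset.range N, ENNReal.ofReal (w n * x n ^ 2) +
      ENNReal.ofReal ε * weightedSqNorm W x := by
  rw [weightedSqNorm, ← ENNReal.summable.sum_add_tsum_nat_add' (k := N)]
  gcongr
  calc ∑' n, ENNReal.ofReal (w (n + N) * x (n + N) ^ 2)
      ≤ ∑' n, ENNReal.ofReal ε * ENNReal.ofReal (W (n + N) * x (n + N) ^ 2) := by
        refine ENNReal.tsum_le_tsum fun n => ?_
        rw [← ENNReal.ofReal_mul hε, ← mul_assoc]
        gcongr
        exact hN _ (Nat.le_add_left N n)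
    _ ≤ ENNReal.ofReal ε * weightedSqNorm W x := by
        rw [ENNReal.tsum_mul_left]
        gcongr
        exact ENNReal.tsum_comp_le_tsum_of_injective (add_left_injective N) _

lemma tendsto_weightedSqNorm_zero {w W : ℕ → ℝ} (hwW : w =o[Filter.atTop] W) (hW : ∀ n, 0 ≤ W n)
    {x : ℕ → ℕ → ℝ} {M : ENNReal} (hM : M ≠ ⊤) (hx : ∀ k, weightedSqNorm W (x k) ≤ M)
    (hlim : ∀ n, Filter.Tendsto (fun k => x k n) Filter.atTop (nhds 0)) :
    Filter.Tendsto (fun k => weightedSqNorm w (x k)) Filter.atTop (nhds 0) := by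
  have htail : ∀ ε : ℝ, 0 < ε →
      Filter.limsup (fun k => weightedSqNorm w (x k)) Filter.atTop ≤ ENNReal.ofReal ε * M := by
    intro ε hε
    obtain ⟨N, hN⟩ := Filter.eventually_atTop.1 (hwW.bound hε)
    have hN' : ∀ n, N ≤ n → w n ≤ ε * W n := fun n hn => by
      have := (le_abs_self _).trans (hN n hn)
      rwa [Real.norm_of_nonneg (hW n)] at this
    have hhead : Filter.Tendsto (fun k => ∑ n ∈ Finset.range N, ENNReal.ofReal (w n * x k n ^ 2) +
        ENNReal.ofReal ε * M) Filter.atTop (nhds (ENNReal.ofReal ε * M)) := by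
      have := (tendsto_finsetSum (Finset.range N) fun n _ =>
        ENNReal.tendsto_ofReal (((hlim n).pow 2).const_mul (w n))).add_const (ENNReal.ofReal ε * M)
      simpa using this
    rw [← hhead.limsup_eq]
    refine Filter.limsup_le_limsup (Filter.Eventually.of_forall fun k => ?_)
    exact (weightedSqNorm_le_sum_range_add hε.le hN' (x k)).trans (by grw [hx k])
  refine tendsto_of_le_liminf_of_limsup_le bot_le ?_
  have hzero : Filter.Tendsto (fun ε : ℝ => ENNReal.ofReal ε * M) (nhdsWithin 0 (Ioi 0))
      (nhds 0) := by
    have h0 := ENNReal.Tendsto.mul_const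
      (ENNReal.tendsto_ofReal (Filter.tendsto_id (α := ℝ) (x := nhds 0))) (Or.inr hM)
    simp only [id_eq, ENNReal.ofReal_zero, zero_mul] at h0
    exact h0.mono_left nhdsWithin_le_nhds
  exact ge_of_tendsto hzero (eventually_mem_nhdsWithin.mono fun ε hε => htail ε hε)

lemma exists_subseq_tendsto_of_weightedSqNorm_le {W : ℕ → ℝ} (hW : ∀ n, 0 < W n)
    {x : ℕ → ℕ → ℝ} {M : ℝ} (hM : 0 ≤ M) (hx : ∀ k, weightedSqNorm W (x k) ≤ ENNReal.ofReal M) :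
    ∃ c : ℕ → ℝ, ∃ φ : ℕ → ℕ, StrictMono φ ∧
      ∀ n, Filter.Tendsto (fun k => x (φ k) n) Filter.atTop (nhds (c n)) := by
  have hbox : ∀ k n, x k n ∈ Icc (-√(M / W n)) √(M / W n) := by
    intro k n
    have hn := (weightedSqNorm_le_iff (fun n => (hW n).le) hM).1 (hx k) {n}
    rw [Finset.sum_singleton, mul_comm, ← le_div_iff₀ (hW n)] at hn
    exact abs_le.1 (Real.abs_le_sqrt hn)
  have hcompact : IsCompact (univ.pi fun n => Icc (-√(M / W n)) √(M / W n)) :=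
    isCompact_univ_pi fun _ => isCompact_Icc
  obtain ⟨c, -, φ, hφ, hlim⟩ := hcompact.tendsto_subseq fun k n _ => hbox k n
  exact ⟨c, φ, hφ, tendsto_pi_nhds.1 hlim⟩

lemma exists_subseq_tendsto_weightedSqNorm_sub {w W : ℕ → ℝ} (hwW : w =o[Filter.atTop] W)
    (hW : ∀ n, 0 < W n) {x : ℕ → ℕ → ℝ} {M : ℝ} (hM : 0 ≤ M)
    (hx : ∀ k, weightedSqNorm W (x k) ≤ ENNReal.ofReal M) :
    ∃ c : ℕ → ℝ, ∃ φ : ℕ → ℕ, StrictMono φ ∧ weightedSqNorm W c ≤ ENNReal.ofReal M ∧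
      Filter.Tendsto (fun k => weightedSqNorm w (x (φ k) - c)) Filter.atTop (nhds 0) := by
  have hW0 : ∀ n, 0 ≤ W n := fun n => (hW n).le
  obtain ⟨c, φ, hφ, hlim⟩ := exists_subseq_tendsto_of_weightedSqNorm_le hW hM hx
  have hc := weightedSqNorm_le_of_tendsto hW0 hM (fun k => hx (φ k)) hlim
  have hdiff : ∀ k, weightedSqNorm W (x (φ k) - c) ≤
      2 * ENNReal.ofReal M + 2 * ENNReal.ofReal M := fun k =>
    (weightedSqNorm_sub_le hW0 _ _).trans (by gcongr; exact hx _)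
  refine ⟨c, φ, hφ, hc, tendsto_weightedSqNorm_zero hwW hW0 (by finiteness) hdiff fun n => ?_⟩
  simpa using (hlim n).sub_const (c n)

/-! ### The sine basis of `L²(0,1)` -/

instance : IsProbabilityMeasure μ01 :=
  ⟨by rw [μ01, Measure.restrict_apply_univ, Real.volume_Ioo, sub_zero, ENNReal.ofReal_one]⟩

lemma integral_μ01 (f : ℝ → ℝ) : ∫ x, f x ∂μ01 = ∫ x in (0 : ℝ)..1, f x := by
  rw [μ01, intervalIntegral.integral_of_le zero_le_one, integral_Ioc_eq_integral_Ioo]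

lemma intervalIntegrable_iff_integrable_μ01 {f : ℝ → ℝ} :
    IntervalIntegrable f volume 0 1 ↔ Integrable f μ01 :=
  intervalIntegrable_iff_integrableOn_Ioo_of_le zero_le_one

lemma intervalIntegrable_coe (v : Hsp) : IntervalIntegrable v volume 0 1 :=
  intervalIntegrable_iff_integrable_μ01.2 ((Lp.memLp v).integrable one_le_two)

/-- The `n`-th Dirichlet eigenfunction `x ↦ sin((n+1)πx)` of `A`; its norm in `H` is `1/√2`. -/
def sinMode (n : ℕ) (x : ℝ) : ℝ := Real.sin (((n : ℝ) + 1) * Real.pi * x)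

@[fun_prop]
lemma continuous_sinMode (n : ℕ) : Continuous (sinMode n) := by
  unfold sinMode
  fun_prop

lemma memLp_sinMode (n : ℕ) : MemLp (sinMode n) 2 μ01 :=
  MemLp.of_bound (continuous_sinMode n).aestronglyMeasurable 1
    (Filter.Eventually.of_forall fun _ => Real.abs_sin_le_one _)

lemma integral_cos_int_mul_pi_mul (k : ℤ) :
    ∫ x in (0 : ℝ)..1, Real.cos (k * Real.pi * x) = if k = 0 then 1 else 0 := by
  split_ifs with hk
  · simp [hk]
  · have hk' : (k : ℝ) * Real.pi ≠ 0 := mul_ne_zero (Int.cast_ne_zero.2 hk) Real.pi_ne_zero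
    rw [intervalIntegral.integral_comp_mul_left (fun x => Real.cos x) hk']
    simp [Real.sin_int_mul_pi]

lemma integral_sinMode_mul_sinMode (m n : ℕ) :
    ∫ x in (0 : ℝ)..1, sinMode m x * sinMode n x = if m = n then 1 / 2 else 0 := by
  have hprod : ∀ x, sinMode m x * sinMode n x =
      1 / 2 * Real.cos (((m - n : ℤ) : ℝ) * Real.pi * x) -
        1 / 2 * Real.cos (((m + n + 2 : ℤ) : ℝ) * Real.pi * x) := by
    intro x
    have hsub : ((m - n : ℤ) : ℝ) * Real.pi * x =
        ((m : ℝ) + 1) * Real.pi * x - ((n : ℝ) + 1) * Real.pi * x := by push_cast; ring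
    have hadd : ((m + n + 2 : ℤ) : ℝ) * Real.pi * x =
        ((m : ℝ) + 1) * Real.pi * x + ((n : ℝ) + 1) * Real.pi * x := by push_cast; ring
    rw [hsub, hadd, Real.cos_sub, Real.cos_add, sinMode, sinMode]
    ring
  have hne : (m + n + 2 : ℤ) ≠ 0 := by omega
  simp_rw [hprod]
  rw [intervalIntegral.integral_sub (by apply Continuous.intervalIntegrable; fun_prop)
    (by apply Continuous.intervalIntegrable; fun_prop), intervalIntegral.integral_const_mul,
    intervalIntegral.integral_const_mul, integral_cos_int_mul_pi_mul,
    integral_cos_int_mul_pi_mul, if_neg hne]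
  simp [sub_eq_zero]

lemma inner_sinMode (v : Hsp) (n : ℕ) :
    inner ℝ ((memLp_sinMode n).toLp (sinMode n)) v = sinCoeff v n := by
  rw [L2.inner_def, sinCoeff, ← integral_μ01]
  refine integral_congr_ae ?_
  filter_upwards [(memLp_sinMode n).coeFn_toLp] with x hx
  rw [hx]
  rfl

lemma inner_sinMode_sinMode (m n : ℕ) :
    inner ℝ ((memLp_sinMode m).toLp (sinMode m)) ((memLp_sinMode n).toLp (sinMode n)) =
      (if m = n then 1 / 2 else 0 : ℝ) := by
  rw [← integral_sinMode_mul_sinMode, ← integral_μ01, L2.inner_def]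
  refine integral_congr_ae ?_
  filter_upwards [(memLp_sinMode m).coeFn_toLp, (memLp_sinMode n).coeFn_toLp] with x hm hn
  rw [hm, hn]
  exact mul_comm _ _

lemma orthonormal_sqrt_two_smul_sinMode :
    Orthonormal ℝ fun n => √2 • (memLp_sinMode n).toLp (sinMode n) := by
  rw [orthonormal_iff_ite]
  intro m n
  have h2 : √2 * √2 = 2 := Real.mul_self_sqrt zero_le_two
  rw [real_inner_smul_left, real_inner_smul_right, inner_sinMode_sinMode, ← mul_assoc, h2]
  split_ifs <;> norm_num

/-- The odd function on `(-1, 1)` which agrees with `v` on `(0, 1)`, extended by zero. Its Fourier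
series on `(-1, 1)` is the sine series of `v`. -/
def oddExtension (v : ℝ → ℝ) (x : ℝ) : ℝ :=
  (Ioo 0 1).indicator v x - (Ioo 0 1).indicator v (-x)

lemma oddExtension_neg (v : ℝ → ℝ) (x : ℝ) : oddExtension v (-x) = -oddExtension v x := by
  rw [oddExtension, oddExtension, neg_neg, neg_sub]

lemma oddExtension_of_mem {v : ℝ → ℝ} {x : ℝ} (hx : x ∈ Ioo (0 : ℝ) 1) :
    oddExtension v x = v x := by
  have hnx : -x ∉ Ioo (0 : ℝ) 1 := fun h => by linarith [h.1, hx.1]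
  rw [oddExtension, indicator_of_mem hx, indicator_of_notMem hnx, sub_zero]

lemma memLp_oddExtension {v : ℝ → ℝ} (hv : MemLp v 2 μ01) : MemLp (oddExtension v) 2 volume := by
  have hind : MemLp ((Ioo 0 1).indicator v) 2 volume :=
    (memLp_indicator_iff_restrict measurableSet_Ioo).2 hv
  exact hind.sub (hind.comp_measurePreserving (Measure.measurePreserving_neg volume))

lemma integral_symm_eq_integral_add {E : Type*} [NormedAddCommGroup E] [NormedSpace ℝ E]
    {f : ℝ → E} {a : ℝ} (h₁ : IntervalIntegrable f volume (-a) 0)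
    (h₂ : IntervalIntegrable f volume 0 a) :
    ∫ x in (-a)..a, f x = ∫ x in (0 : ℝ)..a, (f x + f (-x)) := by
  have h₁' : IntervalIntegrable (fun x => f (-x)) volume 0 a := by
    simpa using (IntervalIntegrable.iff_comp_neg (by finiteness)).1 h₁.symm
  rw [intervalIntegral.integral_add h₂ h₁', intervalIntegral.integral_comp_neg, neg_zero, add_comm,
    intervalIntegral.integral_add_adjacent_intervals h₁ h₂]

lemma integral_sin_int_mul_eq_zero {v : Hsp} (hv : ∀ n, sinCoeff v n = 0) (m : ℤ) :
    ∫ x in (0 : ℝ)..1, v x * Real.sin (m * Real.pi * x) = 0 := by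
  rcases m with (_ | n) | n
  · simp
  · simpa [sinCoeff] using hv n
  · have h := hv n
    have hneg : ∀ x : ℝ, v x * Real.sin ((Int.negSucc n : ℤ) * Real.pi * x) =
        -(v x * Real.sin (((n : ℝ) + 1) * Real.pi * x)) := fun x => by
      rw [← mul_neg, ← Real.sin_neg]
      push_cast [Int.negSucc_eq]
      ring_nf
    simp_rw [hneg]
    rw [intervalIntegral.integral_neg, neg_eq_zero]
    exact h

lemma fourierCoeffOn_oddExtension_eq_zero {v : Hsp} (hv : ∀ n, sinCoeff v n = 0) (m : ℤ) :
    fourierCoeffOn (neg_lt_self one_pos) (fun x => (oddExtension v x : ℂ)) m = 0 := by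
  set h : ℝ → ℂ := fun x => fourier (-m) (x : AddCircle (1 - -1 : ℝ)) • (oddExtension v x : ℂ)
  have hodd : ∀ a b, IntegrableOn (fun x => (oddExtension v x : ℂ)) (Ioc a b) := fun a b =>
    (((memLp_oddExtension (Lp.memLp v)).restrict _).integrable one_le_two).ofReal
  have hint : ∀ a b, IntervalIntegrable h volume a b := fun a b =>
    IntervalIntegrable.continuousOn_smul ⟨hodd a b, hodd b a⟩ (by fun_prop)
  have hpair : ∀ x ∈ Ioo (0 : ℝ) 1,
      h x + h (-x) = (-2 * Complex.I) * ((v x * Real.sin (m * Real.pi * x) : ℝ) : ℂ) := by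
    intro x hx
    have hsin := Complex.two_sin (m * Real.pi * x)
    have hfourier : ∀ y : ℝ, fourier (-m) (y : AddCircle (1 - -1 : ℝ)) =
        Complex.exp (-(m * Real.pi * y) * Complex.I) := fun y => by
      rw [fourier_coe_apply]
      congr 1
      push_cast
      ring
    simp only [h, hfourier, oddExtension_neg, oddExtension_of_mem hx, smul_eq_mul]
    push_cast
    rw [mul_neg, mul_neg, neg_neg]
    linear_combination (v x : ℂ) * Complex.I * hsin + v x *
      (Complex.exp (-(m * Real.pi * x) * Complex.I) - Complex.exp (m * Real.pi * x * Complex.I)) *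
      Complex.I_sq
  have hzero : ∫ x in (0 : ℝ)..1, (h x + h (-x)) = 0 := by
    rw [intervalIntegral.integral_of_le zero_le_one, integral_Ioc_eq_integral_Ioo,
      setIntegral_congr_fun measurableSet_Ioo hpair, ← integral_Ioc_eq_integral_Ioo,
      ← intervalIntegral.integral_of_le zero_le_one, intervalIntegral.integral_const_mul,
      intervalIntegral.integral_ofReal, integral_sin_int_mul_eq_zero hv, Complex.ofReal_zero,
      mul_zero]
  rw [fourierCoeffOn_eq_integral, integral_symm_eq_integral_add (hint _ _) (hint _ _), hzero,
    smul_zero]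

lemma eq_zero_of_sinCoeff_eq_zero {v : Hsp} (hv : ∀ n, sinCoeff v n = 0) : v = 0 := by
  have hLp : MemLp (fun x => (oddExtension v x : ℂ)) 2 (volume.restrict (Ioc (-1) 1)) :=
    ((memLp_oddExtension (Lp.memLp v)).restrict _).ofReal
  have hParseval := tsum_sq_fourierCoeffOn (neg_lt_self one_pos) hLp
  simp only [fourierCoeffOn_oddExtension_eq_zero hv, norm_zero, zero_pow two_ne_zero, tsum_zero,
    Complex.norm_real, Real.norm_eq_abs, sq_abs] at hParseval
  have hzero : ∫ x in Ioc (-1) 1, oddExtension v x ^ 2 = 0 := by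
    rw [← intervalIntegral.integral_of_le (by norm_num)]
    exact (smul_eq_zero.1 hParseval.symm).resolve_left (by norm_num)
  have hint : IntegrableOn (fun x => oddExtension v x ^ 2) (Ioc (-1) 1) :=
    ((memLp_oddExtension (Lp.memLp v)).restrict _).integrable_sq
  have hae := (integral_eq_zero_iff_of_nonneg (fun x => sq_nonneg (oddExtension v x)) hint).1 hzero
  have hsub : Ioo (0 : ℝ) 1 ⊆ Ioc (-1) 1 := fun x hx => ⟨by linarith [hx.1], hx.2.le⟩
  refine Lp.eq_zero_iff_ae_eq_zero.2 ?_
  filter_upwards [ae_restrict_of_ae_restrict_of_subset hsub hae,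
    ae_restrict_mem measurableSet_Ioo] with x hx hmem
  rwa [Pi.zero_apply, sq_eq_zero_iff, oddExtension_of_mem hmem] at hx

lemma orthogonal_span_sinMode_eq_bot :
    (Submodule.span ℝ (range fun n => √2 • (memLp_sinMode n).toLp (sinMode n)))ᗮ = ⊥ := by
  rw [Submodule.eq_bot_iff]
  intro v hv
  refine eq_zero_of_sinCoeff_eq_zero fun n => ?_
  have h := (Submodule.mem_orthogonal _ v).1 hv _ (Submodule.subset_span ⟨n, rfl⟩)
  rw [real_inner_smul_left, inner_sinMode] at h
  exact (mul_eq_zero.1 h).resolve_left (by positivity)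

/-- The orthonormal basis of `H` formed by the normalized Dirichlet eigenfunctions. -/
def sineBasis : HilbertBasis ℕ ℝ Hsp :=
  HilbertBasis.mkOfOrthogonalEqBot orthonormal_sqrt_two_smul_sinMode orthogonal_span_sinMode_eq_bot

lemma inner_sineBasis (v : Hsp) (n : ℕ) : inner ℝ (sineBasis n) v = √2 * sinCoeff v n := by
  rw [sineBasis, HilbertBasis.coe_mkOfOrthogonalEqBot, real_inner_smul_left, inner_sinMode]

lemma hasSum_sinCoeff_sq (v : Hsp) : HasSum (fun n => 2 * sinCoeff v n ^ 2) (‖v‖ ^ 2) := by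
  rw [← real_inner_self_eq_norm_sq]
  refine (sineBasis.hasSum_inner_mul_inner v v).congr_fun fun n => ?_
  rw [real_inner_comm, inner_sineBasis, ← sq, mul_pow, Real.sq_sqrt zero_le_two]

lemma sum_sinCoeff_sq_le (F : Finset ℕ) (v : Hsp) : ∑ n ∈ F, 2 * sinCoeff v n ^ 2 ≤ ‖v‖ ^ 2 :=
  sum_le_hasSum F (fun _ _ => by positivity) (hasSum_sinCoeff_sq v)

lemma exists_sinCoeff_eq {c : ℕ → ℝ} (hc : Summable fun n => c n ^ 2) :
    ∃ v : Hsp, ∀ n, sinCoeff v n = c n := by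
  have hmem : Memℓp (fun n => √2 * c n) 2 := by
    refine memℓp_gen ?_
    simpa [mul_pow] using hc.mul_left 2
  refine ⟨sineBasis.repr.symm ⟨_, hmem⟩, fun n => ?_⟩
  have h := sineBasis.repr_apply_apply (sineBasis.repr.symm ⟨_, hmem⟩) n
  rw [LinearIsometryEquiv.apply_symm_apply, inner_sineBasis] at h
  exact (mul_left_cancel₀ (by positivity) h).symm

/-- The sine coefficient as a continuous linear functional on `H`. -/
def sinCoeffL (n : ℕ) : Hsp →L[ℝ] ℝ := innerSL ℝ ((memLp_sinMode n).toLp (sinMode n))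

@[simp]
lemma sinCoeffL_apply (n : ℕ) (v : Hsp) : sinCoeffL n v = sinCoeff v n := inner_sinMode v n

/-! ### Scalar differential inequalities -/

section Scalar

variable {a b : ℝ}

lemma absolutelyContinuousOnInterval_const_add_integral {g : ℝ → ℝ}
    (hg : IntervalIntegrable g volume a b) (c : ℝ) :
    AbsolutelyContinuousOnInterval (fun x => c + ∫ s in a..x, g s) a b :=
  contDiffOn_const.absolutelyContinuousOnInterval.fun_add
    (hg.absolutelyContinuousOnInterval_intervalIntegral left_mem_uIcc)

lemma ae_hasDerivAt_const_add_integral {g : ℝ → ℝ} (hg : IntervalIntegrable g volume a b) (c : ℝ) :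
    ∀ᵐ x, x ∈ uIoc a b → HasDerivAt (fun x => c + ∫ s in a..x, g s) (g x) x := by
  filter_upwards [hg.ae_hasDerivAt_integral] with x hx hmem
  exact (hx (uIoc_subset_uIcc hmem) a left_mem_uIcc).const_add c

lemma hasDerivAt_exp_neg_mul_sub (lam b s : ℝ) :
    HasDerivAt (fun s => Real.exp (-lam * (b - s))) (Real.exp (-lam * (b - s)) * lam) s := by
  simpa using (((hasDerivAt_id s).const_sub b).const_mul (-lam)).exp

lemma two_mul_mul_sub_mul_sq_le {lam : ℝ} (hlam : 0 < lam) (f y : ℝ) :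
    2 * y * f - lam * y ^ 2 ≤ f ^ 2 / lam := by
  rw [le_div_iff₀ hlam]
  linarith [sq_nonneg (f - lam * y)]

lemma sq_le_exp_mul_sq_add_integral {lam : ℝ} (hlam : 0 < lam) (hab : a ≤ b) {y f g : ℝ → ℝ}
    (hg : IntervalIntegrable g volume a b) (hy : ∀ t ∈ Icc a b, y t = y a + ∫ s in a..t, g s)
    (hgf : ∀ᵐ s, s ∈ Ioc a b → g s = f s - lam * y s)
    (hf : IntervalIntegrable (fun s => f s ^ 2) volume a b) :
    y b ^ 2 ≤ Real.exp (-lam * (b - a)) * y a ^ 2 +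
      ∫ s in a..b, Real.exp (-lam * (b - s)) * (f s ^ 2 / lam) := by
  set Y : ℝ → ℝ := fun t => y a + ∫ s in a..t, g s
  set z : ℝ → ℝ := fun t => Real.exp (-lam * (b - t)) * (Y t * Y t)
  have hYac := absolutelyContinuousOnInterval_const_add_integral hg (y a)
  have hexp : ContDiff ℝ 1 fun t => Real.exp (-lam * (b - t)) := by fun_prop
  have hzac : AbsolutelyContinuousOnInterval z a b :=
    hexp.contDiffOn.absolutelyContinuousOnInterval.fun_mul (hYac.fun_mul hYac)
  have hderiv : ∀ᵐ s, s ∈ Ioc a b → deriv z s ≤ Real.exp (-lam * (b - s)) * (f s ^ 2 / lam) := by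
    filter_upwards [ae_hasDerivAt_const_add_integral hg (y a), hgf] with s hYs hgs hmem
    have hYs : HasDerivAt Y (g s) s := hYs (by rwa [uIoc_of_le hab])
    have hYy : Y s = y s := (hy s (Ioc_subset_Icc_self hmem)).symm
    rw [((hasDerivAt_exp_neg_mul_sub lam b s).fun_mul (hYs.fun_mul hYs)).deriv, hgs hmem, hYy]
    calc _ = Real.exp (-lam * (b - s)) * (2 * y s * f s - lam * y s ^ 2) := by ring
      _ ≤ _ := by gcongr; exact two_mul_mul_sub_mul_sq_le hlam _ _
  have hint : IntervalIntegrable (fun s => Real.exp (-lam * (b - s)) * (f s ^ 2 / lam))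
      volume a b := (hf.div_const lam).continuousOn_mul hexp.continuous.continuousOn
  have hmono := intervalIntegral.integral_mono_ae_restrict hab hzac.intervalIntegrable_deriv hint
    (by rwa [← restrict_Ioc_eq_restrict_Icc, Filter.EventuallyLE,
      ae_restrict_iff' measurableSet_Ioc])
  have hend : z b - z a = y b ^ 2 - Real.exp (-lam * (b - a)) * y a ^ 2 := by
    simp only [z, Y, ← hy b (right_mem_Icc.2 hab), intervalIntegral.integral_same, sub_self]
    simp [sq]
  rw [hzac.integral_deriv_eq_sub, hend] at hmono
  linarith

lemma hasDerivWithinAt_exp_mul_add_integral {h : ℝ → ℝ} (hh : ContinuousOn h (Icc a b)) (p c : ℝ)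
    {t : ℝ} (ht : t ∈ Icc a b) :
    HasDerivWithinAt
      (fun t => Real.exp (-p * (t - a)) * (c + ∫ s in a..t, Real.exp (p * (s - a)) * h s))
      (h t - p * (Real.exp (-p * (t - a)) * (c + ∫ s in a..t, Real.exp (p * (s - a)) * h s)))
      (Icc a b) t := by
  have := Fact.mk ht
  have hg : ContinuousOn (fun s => Real.exp (p * (s - a)) * h s) (Icc a b) := by fun_prop
  have hprim : HasDerivWithinAt (fun t => ∫ s in a..t, Real.exp (p * (s - a)) * h s)
      (Real.exp (p * (t - a)) * h t) (Icc a b) t :=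
    intervalIntegral.integral_hasDerivWithinAt_right
      ((hg.mono (Icc_subset_Icc_right ht.2)).intervalIntegrable_of_Icc ht.1)
      (hg.stronglyMeasurableAtFilter_nhdsWithin measurableSet_Icc t) (hg t ht)
  have hexp : HasDerivAt (fun t => Real.exp (-p * (t - a))) (Real.exp (-p * (t - a)) * -p) t := by
    simpa using (((hasDerivAt_id t).sub_const a).const_mul (-p)).exp
  refine (hexp.hasDerivWithinAt.mul (hprim.const_add c)).congr_deriv ?_
  have hcancel : Real.exp (-p * (t - a)) * Real.exp (p * (t - a)) = 1 := by
    rw [← Real.exp_add, neg_mul, neg_add_cancel, Real.exp_zero]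
  linear_combination h t * hcancel

lemma le_exp_mul_add_div_of_le_add_integral {p q C : ℝ} (hq : 0 ≤ q) (hC : 0 ≤ C) (hqp : q < p)
    (hab : a ≤ b) {y : ℝ → ℝ} (hy : ContinuousOn y (Icc a b))
    (hle : ∀ t ∈ Icc a b, y t ≤ Real.exp (-p * (t - a)) * y a +
      ∫ s in a..t, Real.exp (-p * (t - s)) * (C + q * y s)) :
    y b ≤ Real.exp (-(p - q) * (b - a)) * y a + C / (p - q) := by
  have hpq : 0 < p - q := sub_pos.2 hqp
  have hb : b ∈ Icc a b := right_mem_Icc.2 hab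
  -- The derivative of `Φ` is `C + q y - p Φ`, hence at most `C - (p - q) Φ` because `y ≤ Φ`.
  set Φ : ℝ → ℝ := fun t => Real.exp (-p * (t - a)) *
    (y a + ∫ s in a..t, Real.exp (p * (s - a)) * (C + q * y s))
  have hyΦ : ∀ t ∈ Icc a b, y t ≤ Φ t := fun t ht => by
    refine (hle t ht).trans_eq ?_
    simp only [Φ]
    rw [mul_add, ← intervalIntegral.integral_const_mul]
    congr 1
    refine intervalIntegral.integral_congr fun s _ => ?_
    rw [← mul_assoc, ← Real.exp_add]
    ring_nf
  have hderiv : ∀ t ∈ Icc a b, HasDerivWithinAt Φ (C + q * y t - p * Φ t) (Icc a b) t :=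
    fun t ht => hasDerivWithinAt_exp_mul_add_integral (by fun_prop) p (y a) ht
  have hgronwall := le_gronwallBound_of_liminf_deriv_right_le (δ := y a) (K := -(p - q)) (ε := C)
    (fun t ht => (hderiv t ht).continuousWithinAt)
    (fun t ht r hr => ((hderiv t (Ico_subset_Icc_self ht)).mono_of_mem_nhdsWithin
      (Icc_mem_nhdsGE_of_mem ht)).liminf_right_slope_le hr)
    (by simp [Φ]) (fun t ht => by
      linarith [mul_le_mul_of_nonneg_left (hyΦ t (Ico_subset_Icc_self ht)) hq]) b hb
  rw [gronwallBound_of_K_ne_0 (neg_ne_zero.2 hpq.ne'), div_neg] at hgronwall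
  have hpos : 0 ≤ C / (p - q) * Real.exp (-(p - q) * (b - a)) := by positivity
  linarith [hyΦ b hb]

end Scalar

/-! ### The Dirichlet Laplacian and its fractional domains -/

/-- The `n`-th eigenvalue `((n+1)π)²` of the Dirichlet Laplacian `A`, with eigenfunction
`sinMode n`. -/
def dirichletEigenvalue (n : ℕ) : ℝ := (((n : ℝ) + 1) * Real.pi) ^ 2

lemma pi_sq_le_dirichletEigenvalue (n : ℕ) : Real.pi ^ 2 ≤ dirichletEigenvalue n := by
  have hn : (1 : ℝ) ≤ (n : ℝ) + 1 := le_add_of_nonneg_left n.cast_nonneg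
  unfold dirichletEigenvalue
  gcongr
  exact le_mul_of_one_le_left Real.pi_pos.le hn

lemma dirichletEigenvalue_pos (n : ℕ) : 0 < dirichletEigenvalue n :=
  (pow_pos Real.pi_pos 2).trans_le (pi_sq_le_dirichletEigenvalue n)

lemma tendsto_dirichletEigenvalue_atTop :
    Filter.Tendsto dirichletEigenvalue Filter.atTop Filter.atTop :=
  (Filter.tendsto_pow_atTop two_ne_zero).comp
    ((tendsto_natCast_atTop_atTop.atTop_add tendsto_const_nhds).atTop_mul_const Real.pi_pos)

lemma one_le_dirichletEigenvalue (n : ℕ) : 1 ≤ dirichletEigenvalue n :=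
  (one_le_pow₀ (by linarith [Real.pi_gt_three])).trans (pi_sq_le_dirichletEigenvalue n)

lemma isLittleO_dirichletEigenvalue_rpow {p q : ℝ} (hpq : p < q) :
    (fun n => dirichletEigenvalue n ^ p) =o[Filter.atTop] fun n => dirichletEigenvalue n ^ q := by
  refine (Asymptotics.isLittleO_iff_tendsto' (.of_forall fun n h =>
    absurd h (Real.rpow_pos_of_pos (dirichletEigenvalue_pos n) q).ne')).2 ?_
  refine ((tendsto_rpow_neg_atTop (sub_pos.2 hpq)).comp tendsto_dirichletEigenvalue_atTop).congr
    fun n => ?_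
  rw [Function.comp_apply, neg_sub, Real.rpow_sub (dirichletEigenvalue_pos n)]

lemma rpow_four_mul_eq_dirichletEigenvalue_rpow (r : ℝ) (n : ℕ) :
    (((n : ℝ) + 1) * Real.pi) ^ (4 * r) = dirichletEigenvalue n ^ (2 * r) := by
  rw [dirichletEigenvalue, ← Real.rpow_natCast, ← Real.rpow_mul (by positivity)]
  push_cast
  ring_nf

lemma hasDerivAt_sinMode (n : ℕ) (x : ℝ) :
    HasDerivAt (sinMode n)
      (((n : ℝ) + 1) * Real.pi * Real.cos (((n : ℝ) + 1) * Real.pi * x)) x := by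
  refine ((hasDerivAt_id x).const_mul (((n : ℝ) + 1) * Real.pi)).sin.congr_deriv ?_
  rw [mul_one, id_eq, mul_comm]

lemma hasDerivAt_deriv_sinMode (n : ℕ) (x : ℝ) :
    HasDerivAt (fun x => ((n : ℝ) + 1) * Real.pi * Real.cos (((n : ℝ) + 1) * Real.pi * x))
      (-(dirichletEigenvalue n * sinMode n x)) x := by
  have h := (((hasDerivAt_id x).const_mul (((n : ℝ) + 1) * Real.pi)).cos).const_mul
    (((n : ℝ) + 1) * Real.pi)
  refine h.congr_deriv ?_
  rw [dirichletEigenvalue, sinMode, id_eq]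
  ring

lemma sinMode_zero (n : ℕ) : sinMode n 0 = 0 := by simp [sinMode]

lemma sinMode_one (n : ℕ) : sinMode n 1 = 0 := by
  rw [sinMode, mul_one]
  exact_mod_cast Real.sin_nat_mul_pi (n + 1)

lemma InDomainA.exists_const_add_integral {v w : Hsp} (h : InDomainA v w) :
    ∃ vt : ℝ → ℝ, ContinuousOn vt (Icc 0 1) ∧ vt 0 = 0 ∧ vt 1 = 0 ∧ (∀ᵐ x ∂μ01, vt x = v x) ∧
      ∃ c : ℝ, ∀ x ∈ Ioo (0 : ℝ) 1, HasDerivAt vt (c + ∫ z in (0 : ℝ)..x, w z) x := by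
  obtain ⟨vt, hcont, h0, h1, hae, g, hderiv, hg⟩ := h
  refine ⟨vt, hcont, h0, h1, hae, g (1 / 2) - ∫ z in (0 : ℝ)..(1 / 2), w z, fun x hx => ?_⟩
  have hint : ∀ y ∈ Icc (0 : ℝ) 1, IntervalIntegrable w volume 0 y := fun y hy =>
    (intervalIntegrable_coe w).mono_set (by
      rw [uIcc_of_le hy.1, uIcc_of_le zero_le_one]
      exact Icc_subset_Icc_right hy.2)
  have hsub := intervalIntegral.integral_interval_sub_left (hint x (Ioo_subset_Icc_self hx))
    (hint (1 / 2) (by norm_num))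
  convert hderiv x hx using 1
  linarith [hg x hx (1 / 2) (by norm_num)]

lemma InDomainA.sinCoeff_eq {v w : Hsp} (h : InDomainA v w) (n : ℕ) :
    sinCoeff w n = -dirichletEigenvalue n * sinCoeff v n := by
  obtain ⟨vt, hcont, h0, h1, hae, c, hderiv⟩ := h.exists_const_add_integral
  set G : ℝ → ℝ := fun x => c + ∫ z in (0 : ℝ)..x, w z
  set s' : ℝ → ℝ := fun x => ((n : ℝ) + 1) * Real.pi * Real.cos (((n : ℝ) + 1) * Real.pi * x)
  have hG := absolutelyContinuousOnInterval_const_add_integral (intervalIntegrable_coe w) c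
  have hs : AbsolutelyContinuousOnInterval (sinMode n) 0 1 := by
    refine ContDiffOn.absolutelyContinuousOnInterval (ContDiff.contDiffOn ?_)
    unfold sinMode
    fun_prop
  have hsw : ∫ x in (0 : ℝ)..1, sinMode n x * deriv G x = sinCoeff w n := by
    refine intervalIntegral.integral_congr_ae ?_
    filter_upwards [ae_hasDerivAt_const_add_integral (intervalIntegrable_coe w) c] with x hx hmem
    rw [(hx hmem).deriv]
    exact mul_comm _ _
  have hsv : ∫ x in (0 : ℝ)..1, -(dirichletEigenvalue n * sinMode n x) * vt x =
      -dirichletEigenvalue n * sinCoeff v n := by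
    rw [sinCoeff, ← integral_μ01, ← integral_μ01, ← integral_const_mul]
    refine integral_congr_ae ?_
    filter_upwards [hae] with x hx
    rw [hx, sinMode]
    ring
  have hparts₁ := hs.integral_mul_deriv_eq_deriv_mul hG
  have hparts₂ := intervalIntegral.integral_mul_deriv_eq_deriv_mul_of_hasDerivAt (u := s') (v := vt)
    (v' := G) (a := 0) (b := 1) (by fun_prop) (by rwa [uIcc_of_le zero_le_one])
    (fun x _ => hasDerivAt_deriv_sinMode n x) (fun x hx => hderiv x (by simpa using hx))
    (by apply Continuous.intervalIntegrable; fun_prop) hG.continuousOn.intervalIntegrable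
  have hs' : deriv (sinMode n) = s' := funext fun x => (hasDerivAt_sinMode n x).deriv
  rw [h0, h1, hsv] at hparts₂
  rw [hsw, sinMode_zero, sinMode_one, hs', hparts₂] at hparts₁
  linarith

lemma V2rDistSq_eq_weightedSqNorm (r : ℝ) (v w : Hsp) :
    V2rDistSq r v w =
      weightedSqNorm (fun n => dirichletEigenvalue n ^ (2 * r)) (sinCoeff v - sinCoeff w) := by
  unfold V2rDistSq weightedSqNorm
  simp only [rpow_four_mul_eq_dirichletEigenvalue_rpow, ← sinCoeffL_apply, map_sub, Pi.sub_apply]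

lemma V2rDistSq_zero (r : ℝ) (v : Hsp) :
    V2rDistSq r v 0 =
      weightedSqNorm (fun n => dirichletEigenvalue n ^ (2 * r)) (sinCoeff v) := by
  have h0 : sinCoeff 0 = 0 := funext fun n => by rw [← sinCoeffL_apply, map_zero, Pi.zero_apply]
  rw [V2rDistSq_eq_weightedSqNorm, h0, sub_zero]

lemma memV2r_of_V2rDistSq_ne_top {r : ℝ} {v : Hsp} (h : V2rDistSq r v 0 ≠ ⊤) : MemV2r r v := by
  rw [V2rDistSq_zero] at h
  unfold MemV2r
  simpa only [rpow_four_mul_eq_dirichletEigenvalue_rpow] using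
    summable_of_weightedSqNorm_ne_top
      (fun n => Real.rpow_nonneg (dirichletEigenvalue_pos n).le _) h

lemma V2rDistSq_zero_mono {r ρ : ℝ} (hrρ : r ≤ ρ) (v : Hsp) :
    V2rDistSq r v 0 ≤ V2rDistSq ρ v 0 := by
  rw [V2rDistSq_zero, V2rDistSq_zero]
  refine weightedSqNorm_mono (fun n => ?_) _
  exact Real.rpow_le_rpow_of_exponent_le (one_le_dirichletEigenvalue n) (by linarith)

lemma exists_subseq_tendsto_V2rDistSq {r ρ M : ℝ} (hρ : 0 ≤ ρ) (hrρ : r < ρ) (hM : 0 ≤ M)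
    {f : ℕ → Hsp} (hf : ∀ k, V2rDistSq ρ (f k) 0 ≤ ENNReal.ofReal M) :
    ∃ a : Hsp, ∃ φ : ℕ → ℕ, StrictMono φ ∧
      Filter.Tendsto (fun k => V2rDistSq r (f (φ k)) a) Filter.atTop (nhds 0) := by
  have hpos : ∀ n, 0 < dirichletEigenvalue n ^ (2 * ρ) := fun n =>
    Real.rpow_pos_of_pos (dirichletEigenvalue_pos n) _
  obtain ⟨c, φ, hφ, hc, hlim⟩ := exists_subseq_tendsto_weightedSqNorm_sub
    (isLittleO_dirichletEigenvalue_rpow (by linarith : 2 * r < 2 * ρ)) hpos hM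
    fun k => (V2rDistSq_zero ρ (f k)).symm.trans_le (hf k)
  have hsummable : Summable fun n => c n ^ 2 := by
    refine (summable_of_weightedSqNorm_ne_top (fun n => (hpos n).le)
      (ne_top_of_le_ne_top ENNReal.ofReal_ne_top hc)).of_nonneg_of_le (fun n => sq_nonneg _)
      fun n => le_mul_of_one_le_left (sq_nonneg _) ?_
    exact Real.one_le_rpow (one_le_dirichletEigenvalue n) (by linarith)
  obtain ⟨a, ha⟩ := exists_sinCoeff_eq hsummable
  refine ⟨a, φ, hφ, ?_⟩
  simpa only [V2rDistSq_eq_weightedSqNorm, show sinCoeff a = c from funext ha] using hlim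

/-! ### Strong solutions mode by mode -/

namespace IsStrongSolutionWith

variable {b ω : ℝ → ℝ} {τ : ℝ} {u r u' uxx : ℝ → Hsp}

lemma ae_sinCoeff_deriv_eq (hu : IsStrongSolutionWith b ω τ u r u' uxx) (n : ℕ) :
    ∀ᵐ s, s ∈ Ioi τ →
      sinCoeff (u' s) n = sinCoeff (r s) n - dirichletEigenvalue n * sinCoeff (u s) n := by
  rw [← ae_restrict_iff' measurableSet_Ioi]
  filter_upwards [hu.eq, hu.dom] with s heq hdom
  rw [heq, ← sinCoeffL_apply, map_add, sinCoeffL_apply, sinCoeffL_apply, hdom.sinCoeff_eq, neg_mul,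
    ← sub_eq_add_neg]

lemma intervalIntegrable_sinCoeff_sq (hu : IsStrongSolutionWith b ω τ u r u' uxx) {T t : ℝ}
    (hT : τ ≤ T) (hTt : T < t) (n : ℕ) :
    IntervalIntegrable (fun s => sinCoeff (r s) n ^ 2) volume T t := by
  have hr : MemLp (fun s => sinCoeff (r s) n) 2 (volume.restrict (Ioo T t)) := by
    simpa only [Function.comp_def, sinCoeffL_apply] using
      ((sinCoeffL n).comp_memLp' (hu.rmem t (hT.trans_lt hTt))).mono_measure
        (Measure.restrict_mono (Ioo_subset_Ioo_left hT) le_rfl)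
  exact (intervalIntegrable_iff_integrableOn_Ioo_of_le hTt.le).2 hr.integrable_sq

lemma sinCoeff_sq_le (hu : IsStrongSolutionWith b ω τ u r u' uxx) {T t : ℝ} (hT : τ < T)
    (hTt : T < t) (n : ℕ) :
    sinCoeff (u t) n ^ 2 ≤ Real.exp (-dirichletEigenvalue n * (t - T)) * sinCoeff (u T) n ^ 2 +
      ∫ s in T..t, Real.exp (-dirichletEigenvalue n * (t - s)) *
        (sinCoeff (r s) n ^ 2 / dirichletEigenvalue n) := by
  obtain ⟨hu', hfund⟩ := hu.fund T t hT hTt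
  refine sq_le_exp_mul_sq_add_integral (y := fun s => sinCoeff (u s) n)
    (g := fun s => sinCoeff (u' s) n) (dirichletEigenvalue_pos n) hTt.le ?_ (fun s hs => ?_) ?_
    (hu.intervalIntegrable_sinCoeff_sq hT.le hTt n)
  · simpa only [← sinCoeffL_apply] using
      ⟨(sinCoeffL n).integrable_comp hu'.1, (sinCoeffL n).integrable_comp hu'.2⟩
  · have hint : IntervalIntegrable u' volume T s :=
      hu'.mono_set (by
        rw [uIcc_of_le hs.1, uIcc_of_le hTt.le]
        exact Icc_subset_Icc_right hs.2)
    simp only [← sinCoeffL_apply]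
    rw [hfund s hs, map_add, (sinCoeffL n).intervalIntegral_comp_comm hint]
  · filter_upwards [hu.ae_sinCoeff_deriv_eq n] with s hs hmem
    exact hs (hT.trans hmem.1)

lemma two_mul_mul_sinCoeff_sq_le (hu : IsStrongSolutionWith b ω τ u r u' uxx) {T t : ℝ}
    (hT : τ < T) (hTt : T < t) {c A : ℝ} (hc : 0 ≤ c) (n : ℕ)
    (hA : c * Real.exp (-dirichletEigenvalue n * (t - T)) ≤ A) :
    2 * (c * sinCoeff (u t) n ^ 2) ≤ A * (2 * sinCoeff (u T) n ^ 2) +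
      ∫ s in T..t, c / dirichletEigenvalue n * Real.exp (-dirichletEigenvalue n * (t - s)) *
        (2 * sinCoeff (r s) n ^ 2) := by
  have hmode := mul_le_mul_of_nonneg_left (hu.sinCoeff_sq_le hT hTt n) (mul_nonneg zero_le_two hc)
  rw [mul_add, ← intervalIntegral.integral_const_mul] at hmode
  have hkernel : ∀ s, 2 * c * (Real.exp (-dirichletEigenvalue n * (t - s)) *
      (sinCoeff (r s) n ^ 2 / dirichletEigenvalue n)) =
        c / dirichletEigenvalue n * Real.exp (-dirichletEigenvalue n * (t - s)) *
          (2 * sinCoeff (r s) n ^ 2) := fun s => by ring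
  simp only [hkernel] at hmode
  linarith [mul_le_mul_of_nonneg_right hA (mul_nonneg zero_le_two (sq_nonneg (sinCoeff (u T) n)))]

lemma sum_integral_mul_sinCoeff_sq_le (hu : IsStrongSolutionWith b ω τ u r u' uxx) {T t : ℝ}
    (hT : τ ≤ T) (hTt : T < t) {k : ℕ → ℝ → ℝ} {κ g : ℝ → ℝ} (hk : ∀ n, Continuous (k n))
    (hκ : ∀ s ∈ Ioo T t, 0 ≤ κ s) (hkκ : ∀ s ∈ Ioo T t, ∀ n, k n s ≤ κ s)
    (hg : ∀ᵐ s, s ∈ Ioo T t → ‖r s‖ ^ 2 ≤ g s)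
    (hκg : IntervalIntegrable (fun s => κ s * g s) volume T t) (F : Finset ℕ) :
    ∑ n ∈ F, ∫ s in T..t, k n s * (2 * sinCoeff (r s) n ^ 2) ≤ ∫ s in T..t, κ s * g s := by
  have hint : ∀ n ∈ F, IntervalIntegrable (fun s => k n s * (2 * sinCoeff (r s) n ^ 2))
      volume T t := fun n _ =>
    ((hu.intervalIntegrable_sinCoeff_sq hT hTt n).const_mul 2).continuousOn_mul (hk n).continuousOn
  rw [← intervalIntegral.integral_finsetSum hint]
  refine intervalIntegral.integral_mono_ae_restrict hTt.le ?_ hκg ?_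
  · simpa only [Finset.sum_fn] using IntervalIntegrable.sum F hint
  rw [← restrict_Ioo_eq_restrict_Icc, Filter.EventuallyLE, ae_restrict_iff' measurableSet_Ioo]
  filter_upwards [hg] with s hgs hs
  have hκs := hκ s hs
  calc ∑ n ∈ F, k n s * (2 * sinCoeff (r s) n ^ 2)
      ≤ ∑ n ∈ F, κ s * (2 * sinCoeff (r s) n ^ 2) := by
        gcongr with n
        exact hkκ s hs n
    _ ≤ κ s * g s := by
        rw [← Finset.mul_sum]
        gcongr
        exact (sum_sinCoeff_sq_le F (r s)).trans (hgs hs)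

lemma two_mul_sum_mul_sinCoeff_sq_le (hu : IsStrongSolutionWith b ω τ u r u' uxx) {T t : ℝ}
    (hT : τ < T) (hTt : T < t) {w : ℕ → ℝ} (hw : ∀ n, 0 ≤ w n) {A : ℝ} {κ g : ℝ → ℝ}
    (hA : ∀ n, w n * Real.exp (-dirichletEigenvalue n * (t - T)) ≤ A)
    (hκ : ∀ s ∈ Ioo T t, ∀ n,
      w n / dirichletEigenvalue n * Real.exp (-dirichletEigenvalue n * (t - s)) ≤ κ s)
    (hg : ∀ᵐ s, s ∈ Ioo T t → ‖r s‖ ^ 2 ≤ g s)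
    (hκg : IntervalIntegrable (fun s => κ s * g s) volume T t) (F : Finset ℕ) :
    2 * ∑ n ∈ F, w n * sinCoeff (u t) n ^ 2 ≤ A * ‖u T‖ ^ 2 + ∫ s in T..t, κ s * g s := by
  have hA0 : 0 ≤ A := (mul_nonneg (hw 0) (Real.exp_pos _).le).trans (hA 0)
  have hκ0 : ∀ s ∈ Ioo T t, 0 ≤ κ s := fun s hs =>
    (mul_nonneg (div_nonneg (hw 0) (dirichletEigenvalue_pos 0).le) (Real.exp_pos _).le).trans
      (hκ s hs 0)
  calc 2 * ∑ n ∈ F, w n * sinCoeff (u t) n ^ 2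
      ≤ ∑ n ∈ F, (A * (2 * sinCoeff (u T) n ^ 2) +
          ∫ s in T..t, w n / dirichletEigenvalue n *
            Real.exp (-dirichletEigenvalue n * (t - s)) * (2 * sinCoeff (r s) n ^ 2)) := by
        rw [Finset.mul_sum]
        exact Finset.sum_le_sum fun n _ => hu.two_mul_mul_sinCoeff_sq_le hT hTt (hw n) n (hA n)
    _ ≤ A * ‖u T‖ ^ 2 + ∫ s in T..t, κ s * g s := by
        rw [Finset.sum_add_distrib, ← Finset.mul_sum]
        exact add_le_add (mul_le_mul_of_nonneg_left (sum_sinCoeff_sq_le F (u T)) hA0)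
          (hu.sum_integral_mul_sinCoeff_sq_le hT.le hTt (fun n => by fun_prop) hκ0 hκ hg hκg F)

end IsStrongSolutionWith

/-! ### The absorbing ball -/

section Dissipativity

lemma abs_le_one_of_mem_heaviside {s h : ℝ} (hh : h ∈ heaviside s) : |h| ≤ 1 := by
  unfold heaviside at hh
  split_ifs at hh
  · simp [mem_singleton_iff.1 hh]
  · exact abs_le.2 hh
  · simp [mem_singleton_iff.1 hh]

lemma Cond1.abs_b_le {b ω : ℝ → ℝ} {b0 b1 ω0 ω1 : ℝ} (hC : Cond1 b ω b0 b1 ω0 ω1) (t : ℝ) :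
    |b t| ≤ b1 :=
  (abs_of_pos (hC.b0pos.trans_le (hC.blb t))).trans_le (hC.bub t)

lemma Cond1.abs_ω_le {b ω : ℝ → ℝ} {b0 b1 ω0 ω1 : ℝ} (hC : Cond1 b ω b0 b1 ω0 ω1) (t : ℝ) :
    |ω t| ≤ ω1 :=
  (abs_of_nonneg (hC.ω0nonneg.trans (hC.ωlb t))).trans_le (hC.ωub t)

lemma exists_sq_add_mul_le (b : ℝ) {ω m : ℝ} (hω : 0 ≤ ω) (hωm : ω < m) :
    ∃ q C : ℝ, 0 ≤ q ∧ q < m ∧ 0 ≤ C ∧ ∀ y : ℝ, (b + ω * y) ^ 2 ≤ m * (C + q * y ^ 2) := by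
  have hm : 0 < m := hω.trans_lt hωm
  have hd : 0 < m - ω := sub_pos.2 hωm
  refine ⟨ω * (ω + m) / (2 * m), (b ^ 2 + 2 * ω * b ^ 2 / (m - ω)) / m, by positivity, ?_,
    by positivity, fun y => ?_⟩
  · rw [div_lt_iff₀ (by positivity)]
    nlinarith
  · have hsq : m * ((b ^ 2 + 2 * ω * b ^ 2 / (m - ω)) / m + ω * (ω + m) / (2 * m) * y ^ 2) -
        (b + ω * y) ^ 2 = ω * (m - ω) / 2 * (y - 2 * b / (m - ω)) ^ 2 := by
      field_simp
      ring
    have : 0 ≤ ω * (m - ω) / 2 * (y - 2 * b / (m - ω)) ^ 2 := by positivity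
    linarith

variable {b ω : ℝ → ℝ} {τ : ℝ} {u r u' uxx : ℝ → Hsp} {b1 ω1 : ℝ}

namespace IsStrongSolutionWith

lemma ae_norm_selection_le (hu : IsStrongSolutionWith b ω τ u r u' uxx) (hb : ∀ t, |b t| ≤ b1)
    (hω : ∀ t, |ω t| ≤ ω1) : ∀ᵐ s, s ∈ Ioi τ → ‖r s‖ ≤ b1 + ω1 * ‖u s‖ := by
  rw [← ae_restrict_iff' measurableSet_Ioi]
  filter_upwards [hu.sel] with s hs
  have hforcing : ‖r s - ω s • u s‖ ≤ b1 := by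
    refine (Lp.norm_le_of_ae_bound ((abs_nonneg (b s)).trans (hb s)) ?_).trans_eq
      (by simp [measureUnivNNReal])
    filter_upwards [hs, Lp.coeFn_sub (r s) (ω s • u s), Lp.coeFn_smul (ω s) (u s)]
      with x ⟨h, hh, hrx⟩ hsub hsmul
    rw [hsub, Pi.sub_apply, hsmul, Pi.smul_apply, hrx, smul_eq_mul, add_sub_cancel_right,
      Real.norm_eq_abs, abs_mul]
    exact (mul_le_of_le_one_right (abs_nonneg _) (abs_le_one_of_mem_heaviside hh)).trans (hb s)
  calc ‖r s‖ = ‖(r s - ω s • u s) + ω s • u s‖ := by rw [sub_add_cancel]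
    _ ≤ b1 + ω1 * ‖u s‖ := by
        refine (norm_add_le _ _).trans (add_le_add hforcing ?_)
        rw [norm_smul, Real.norm_eq_abs]
        gcongr
        exact hω s

lemma norm_sq_le_exp_mul_add_integral (hu : IsStrongSolutionWith b ω τ u r u' uxx)
    {g : ℝ → ℝ} (hg : ∀ᵐ s, s ∈ Ioi τ → ‖r s‖ ^ 2 ≤ Real.pi ^ 2 * g s) {T t : ℝ} (hT : τ < T)
    (hTt : T < t) (hgc : ContinuousOn g (Icc T t)) :
    ‖u t‖ ^ 2 ≤ Real.exp (-Real.pi ^ 2 * (t - T)) * ‖u T‖ ^ 2 +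
      ∫ s in T..t, Real.exp (-Real.pi ^ 2 * (t - s)) * g s := by
  have hexp : ∀ s ∈ Icc T t, ∀ n, Real.exp (-dirichletEigenvalue n * (t - s)) ≤
      Real.exp (-Real.pi ^ 2 * (t - s)) := fun s hs n =>
    Real.exp_le_exp.2 (mul_le_mul_of_nonneg_right
      (neg_le_neg (pi_sq_le_dirichletEigenvalue n)) (sub_nonneg.2 hs.2))
  have hint : IntervalIntegrable (fun s => Real.exp (-Real.pi ^ 2 * (t - s)) / Real.pi ^ 2 *
      (Real.pi ^ 2 * g s)) volume T t := by
    refine ContinuousOn.intervalIntegrable_of_Icc hTt.le ?_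
    exact (Continuous.continuousOn (by fun_prop)).mul (hgc.const_mul _)
  refine hasSum_le_of_sum_le (hasSum_sinCoeff_sq (u t)) fun F => ?_
  have hsum := hu.two_mul_sum_mul_sinCoeff_sq_le hT hTt (w := fun _ => 1) (fun _ => zero_le_one)
    (fun n => (one_mul _).trans_le (hexp T (left_mem_Icc.2 hTt.le) n))
    (fun s hs n => ?_) ?_ hint F
  · simpa only [one_mul, Finset.mul_sum, div_mul_eq_mul_div, mul_div_assoc,
      mul_div_cancel_left₀ _ (pow_ne_zero 2 Real.pi_ne_zero)] using hsum
  · rw [one_div, inv_mul_eq_div]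
    exact div_le_div₀ (Real.exp_pos _).le (hexp s (Ioo_subset_Icc_self hs) n)
      (pow_pos Real.pi_pos 2) (pi_sq_le_dirichletEigenvalue n)
  · filter_upwards [hg] with s hgs hs
    exact hgs (hT.trans hs.1)

end IsStrongSolutionWith

lemma exists_norm_sq_le_exp_mul_add (hb : ∀ t, |b t| ≤ b1) (hω : ∀ t, |ω t| ≤ ω1)
    (hω1 : ω1 < Real.pi ^ 2) :
    ∃ δ K : ℝ, 0 < δ ∧ ∀ τ u, IsStrongSolution b ω τ u → ∀ t, τ < t →
      ‖u t‖ ^ 2 ≤ Real.exp (-δ * (t - τ)) * ‖u τ‖ ^ 2 + K := by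
  obtain ⟨q, C, hq, hqπ, hC, hyoung⟩ :=
    exists_sq_add_mul_le b1 ((abs_nonneg (ω 0)).trans (hω 0)) hω1
  refine ⟨Real.pi ^ 2 - q, C / (Real.pi ^ 2 - q), sub_pos.2 hqπ, ?_⟩
  rintro τ u ⟨r, u', uxx, hu⟩ t hτt
  have hcont : ∀ {T}, τ ≤ T → ContinuousOn (fun s => ‖u s‖ ^ 2) (Icc T t) := fun hT =>
    (hu.cont.mono (Icc_subset_Ici_self.trans (Ici_subset_Ici.2 hT))).norm.pow 2
  have hg : ∀ᵐ s, s ∈ Ioi τ → ‖r s‖ ^ 2 ≤ Real.pi ^ 2 * (C + q * ‖u s‖ ^ 2) := by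
    filter_upwards [hu.ae_norm_selection_le hb hω] with s hs hmem
    exact (pow_le_pow_left₀ (norm_nonneg _) (hs hmem) 2).trans (hyoung _)
  have hinterior : ∀ T ∈ Ioo τ t, ‖u t‖ ^ 2 ≤
      Real.exp (-(Real.pi ^ 2 - q) * (t - T)) * ‖u T‖ ^ 2 + C / (Real.pi ^ 2 - q) := by
    intro T hT
    refine le_exp_mul_add_div_of_le_add_integral (y := fun s => ‖u s‖ ^ 2) hq hC hqπ hT.2.le
      (hcont hT.1.le) fun s hs => ?_
    rcases hs.1.eq_or_lt with rfl | hTs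
    · simp
    · exact hu.norm_sq_le_exp_mul_add_integral hg hT.1 hTs
        (continuousOn_const.add
          (((hcont hT.1.le).mono (Icc_subset_Icc_right hs.2)).const_mul q))
  have hlim : Filter.Tendsto
      (fun T => Real.exp (-(Real.pi ^ 2 - q) * (t - T)) * ‖u T‖ ^ 2 + C / (Real.pi ^ 2 - q))
      (nhdsWithin τ (Ioi τ))
      (nhds (Real.exp (-(Real.pi ^ 2 - q) * (t - τ)) * ‖u τ‖ ^ 2 + C / (Real.pi ^ 2 - q))) := by
    have huτ := ((hu.cont τ self_mem_Ici).mono Ioi_subset_Ici_self).norm.pow 2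
    exact (((by fun_prop : Continuous fun T => Real.exp (-(Real.pi ^ 2 - q) * (t - T))).tendsto
      τ |>.mono_left nhdsWithin_le_nhds).mul huτ).add_const _
  exact ge_of_tendsto hlim
    (Filter.mem_of_superset (Ioo_mem_nhdsGT hτt) hinterior)

lemma exists_pullbackAttracting_closedBall (hb : ∀ t, |b t| ≤ b1) (hω : ∀ t, |ω t| ≤ ω1)
    (hω1 : ω1 < Real.pi ^ 2) :
    ∃ R : ℝ, PullbackAttracting b ω fun _ => Metric.closedBall 0 R := by
  obtain ⟨δ, K, hδ, hdecay⟩ := exists_norm_sq_le_exp_mul_add hb hω hω1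
  refine ⟨√(1 + K), fun t B hB ε hε => ?_⟩
  obtain ⟨ρ, hρ⟩ := hB.exists_norm_le
  have hlim : Filter.Tendsto (fun s => Real.exp (-δ * (t - s)) * ρ ^ 2) Filter.atBot
      (nhds 0) := by
    have hexponent : Filter.Tendsto (fun s => -δ * (t - s)) Filter.atBot Filter.atBot :=
      Filter.Tendsto.const_mul_atTop_of_neg (neg_neg_of_pos hδ)
        (Filter.tendsto_atTop_add_const_left _ t Filter.tendsto_neg_atBot_atTop)
    simpa only [Function.comp_def, zero_mul] using
      (Real.tendsto_exp_atBot.comp hexponent).mul_const (ρ ^ 2)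
  obtain ⟨S, hS⟩ := Filter.eventually_atBot.1
    ((hlim.eventually_le_const zero_lt_one).and (Filter.eventually_lt_atBot t))
  refine ⟨S, (hS S le_rfl).2.le, ?_⟩
  rintro s hs _ ⟨u, hus, hu, rfl⟩
  refine ⟨u t, mem_closedBall_zero_iff.2 (Real.le_sqrt_of_sq_le ?_), by simpa using hε⟩
  calc ‖u t‖ ^ 2 ≤ Real.exp (-δ * (t - s)) * ‖u s‖ ^ 2 + K := hdecay s u hu t (hS s hs).2
    _ ≤ Real.exp (-δ * (t - s)) * ρ ^ 2 + K := by
        gcongr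
        exact hρ _ hus
    _ ≤ 1 + K := by grw [(hS s hs).1]

end Dissipativity

/-! ### Smoothing -/

lemma rpow_le_two_mul_exp {x s : ℝ} (hx : 0 ≤ x) (hs : 0 ≤ s) (hs2 : s ≤ 2) :
    x ^ s ≤ 2 * Real.exp x := by
  have hpow : x ^ s ≤ 1 + x ^ 2 := by
    rcases le_total x 1 with h | h
    · exact (Real.rpow_le_one hx h hs).trans (le_add_of_nonneg_right (sq_nonneg x))
    · refine (Real.rpow_le_rpow_of_exponent_le h hs2).trans ?_
      rw [Real.rpow_two]
      exact le_add_of_nonneg_left zero_le_one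
  linarith [Real.quadratic_le_exp_of_nonneg hx]

lemma rpow_mul_exp_neg_mul_le {x h s : ℝ} (hx : 0 ≤ x) (hh : 0 < h) (hs : 0 ≤ s) (hs2 : s ≤ 2) :
    x ^ s * Real.exp (-x * h) ≤ 2 * h ^ (-s) := by
  have hxh := rpow_le_two_mul_exp (mul_nonneg hx hh.le) hs hs2
  rw [Real.mul_rpow hx hh.le] at hxh
  rw [neg_mul, Real.exp_neg, Real.rpow_neg hh.le, ← div_eq_mul_inv, ← div_eq_mul_inv,
    div_le_div_iff₀ (Real.exp_pos _) (Real.rpow_pos_of_pos hh s)]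
  exact hxh

lemma intervalIntegrable_sub_rpow {s T t : ℝ} (hs : -1 < s) :
    IntervalIntegrable (fun x => (t - x) ^ s) volume T t := by
  simpa using (intervalIntegral.intervalIntegrable_rpow' (a := t - T) (b := 0) hs).comp_sub_left t

lemma integral_sub_rpow {s T t : ℝ} (hs : -1 < s) :
    ∫ x in T..t, (t - x) ^ s = (t - T) ^ (s + 1) / (s + 1) := by
  rw [intervalIntegral.integral_comp_sub_left (fun x => x ^ s) t, sub_self,
    integral_rpow (Or.inl hs), Real.zero_rpow (by linarith), sub_zero]

lemma IsStrongSolutionWith.V2rDistSq_zero_le {b ω : ℝ → ℝ} {τ : ℝ}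
    {u r u' uxx : ℝ → Hsp} (hu : IsStrongSolutionWith b ω τ u r u' uxx) {T t G ρ : ℝ}
    (hT : τ < T) (hTt : T < t) (hg : ∀ᵐ s, s ∈ Ioo T t → ‖r s‖ ^ 2 ≤ G) (hρ : 1 / 2 ≤ ρ)
    (hρ1 : ρ < 1) :
    V2rDistSq ρ (u t) 0 ≤
      ENNReal.ofReal ((t - T) ^ (-(2 * ρ)) * ‖u T‖ ^ 2 +
        (t - T) ^ (2 - 2 * ρ) / (2 - 2 * ρ) * G) := by
  have hsum : ∀ F : Finset ℕ,
      ∑ n ∈ F, dirichletEigenvalue n ^ (2 * ρ) * sinCoeff (u t) n ^ 2 ≤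
        (t - T) ^ (-(2 * ρ)) * ‖u T‖ ^ 2 + (t - T) ^ (2 - 2 * ρ) / (2 - 2 * ρ) * G := by
    intro F
    have h := hu.two_mul_sum_mul_sinCoeff_sq_le hT hTt
      (w := fun n => dirichletEigenvalue n ^ (2 * ρ)) (A := 2 * (t - T) ^ (-(2 * ρ)))
      (κ := fun s => 2 * (t - s) ^ (1 - 2 * ρ)) (g := fun _ => G)
      (fun n => Real.rpow_nonneg (dirichletEigenvalue_pos n).le _)
      (fun n => rpow_mul_exp_neg_mul_le (dirichletEigenvalue_pos n).le (sub_pos.2 hTt)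
        (by linarith) (by linarith))
      (fun s hs n => by
        rw [← Real.rpow_sub_one (dirichletEigenvalue_pos n).ne', ← neg_sub (2 * ρ)]
        exact rpow_mul_exp_neg_mul_le (dirichletEigenvalue_pos n).le (sub_pos.2 hs.2)
          (by linarith) (by linarith))
      hg (((intervalIntegrable_sub_rpow (by linarith)).const_mul 2).mul_const G) F
    rw [intervalIntegral.integral_mul_const, intervalIntegral.integral_const_mul,
      integral_sub_rpow (by linarith), show 1 - 2 * ρ + 1 = 2 - 2 * ρ by ring] at h
    linarith
  rw [V2rDistSq_zero]
  exact (weightedSqNorm_le_iff (fun n => Real.rpow_nonneg (dirichletEigenvalue_pos n).le _)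
    (hsum ∅)).2 hsum

lemma exists_V2rDistSq_zero_le_of_invariant {b ω : ℝ → ℝ} {b1 ω1 R ρ : ℝ}
    {K : ℝ → Set Hsp} (hb : ∀ t, |b t| ≤ b1) (hω : ∀ t, |ω t| ≤ ω1)
    (hinv : ∀ t s, s ≤ t → procU b ω t s (K s) = K t) (hR : ∀ t, K t ⊆ Metric.closedBall 0 R)
    (hρ : 1 / 2 ≤ ρ) (hρ1 : ρ < 1) :
    ∃ M : ℝ, 0 ≤ M ∧ ∀ v ∈ ⋃ t, K t, V2rDistSq ρ v 0 ≤ ENNReal.ofReal M := by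
  refine ⟨R ^ 2 + (b1 + ω1 * R) ^ 2 / (2 - 2 * ρ), by
    have : 0 < 2 - 2 * ρ := by linarith
    positivity, fun v hv => ?_⟩
  obtain ⟨t, hvt⟩ := mem_iUnion.1 hv
  rw [← hinv t (t - 2) (by linarith)] at hvt
  obtain ⟨u, hu0, ⟨r, u', uxx, hu⟩, rfl⟩ := hvt
  have hω1 : 0 ≤ ω1 := (abs_nonneg _).trans (hω 0)
  have huR : ∀ s, t - 2 ≤ s → ‖u s‖ ≤ R := fun s hs => by
    have hus : u s ∈ K s := hinv s (t - 2) hs ▸ ⟨u, hu0, ⟨r, u', uxx, hu⟩, rfl⟩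
    exact mem_closedBall_zero_iff.1 (hR s hus)
  have hr : ∀ᵐ s, s ∈ Ioo (t - 1) t → ‖r s‖ ^ 2 ≤ (b1 + ω1 * R) ^ 2 := by
    filter_upwards [hu.ae_norm_selection_le hb hω] with s hrs hs
    have hs' : t - 2 < s := by linarith [hs.1]
    refine pow_le_pow_left₀ (norm_nonneg _) ((hrs hs').trans ?_) 2
    gcongr
    exact huR s hs'.le
  refine (hu.V2rDistSq_zero_le (by linarith) (by linarith) hr hρ hρ1).trans ?_
  simp only [sub_sub_cancel, Real.one_rpow, one_mul, one_div, inv_mul_eq_div]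
  gcongr
  exact huR _ (by linarith)

theorem statement12_general {b ω : ℝ → ℝ} {b1 ω1 : ℝ} (hb : ∀ t, |b t| ≤ b1)
    (hω : ∀ t, |ω t| ≤ ω1) (hω1 : ω1 < Real.pi ^ 2) {𝒜 : ℝ → Set Hsp}
    (hinv : ∀ t s, s ≤ t → procU b ω t s (𝒜 s) = 𝒜 t)
    (hmin : ∀ K : ℝ → Set Hsp, (∀ t, IsClosed (K t)) → PullbackAttracting b ω K → ∀ t, 𝒜 t ⊆ K t)
    {r : ℝ} (hr : r < 1) :
    (∀ v ∈ ⋃ t : ℝ, 𝒜 t, MemV2r r v) ∧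
      (∃ M : ℝ, ∀ v ∈ ⋃ t : ℝ, 𝒜 t, V2rDistSq r v 0 ≤ ENNReal.ofReal M) ∧
      ∀ f : ℕ → Hsp, (∀ n, f n ∈ ⋃ t : ℝ, 𝒜 t) →
        ∃ a : Hsp, ∃ φ : ℕ → ℕ, StrictMono φ ∧
          Filter.Tendsto (fun n => V2rDistSq r (f (φ n)) a) Filter.atTop (nhds 0) := by
  obtain ⟨ρ, hρ, hρ1⟩ := exists_between (max_lt hr (by norm_num : (1 / 2 : ℝ) < 1))
  obtain ⟨hrρ, hρ_half⟩ := max_lt_iff.1 hρ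
  obtain ⟨R, hR⟩ := exists_pullbackAttracting_closedBall hb hω hω1
  obtain ⟨M, hM, hbound⟩ := exists_V2rDistSq_zero_le_of_invariant hb hω hinv
    (hmin _ (fun _ => Metric.isClosed_closedBall) hR) hρ_half.le hρ1
  have hbound_r : ∀ v ∈ ⋃ t, 𝒜 t, V2rDistSq r v 0 ≤ ENNReal.ofReal M := fun v hv =>
    (V2rDistSq_zero_mono hrρ.le v).trans (hbound v hv)
  refine ⟨fun v hv => ?_, ⟨M, hbound_r⟩, fun f hf => ?_⟩
  · exact memV2r_of_V2rDistSq_ne_top (ne_top_of_le_ne_top ENNReal.ofReal_ne_top (hbound_r v hv))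
  · exact exists_subseq_tendsto_V2rDistSq (by linarith) hrρ hM fun k => hbound _ (hf k)

/-- under (Cond1) and `ω₁ < π²`, the union of the sections of the
pullback attractor is relatively compact in `V^{2r}` for every `0 ≤ r < 1`:
it is bounded in `V^{2r}` and every sequence in it has a subsequence converging
in the `V^{2r}` metric. -/
theorem statement12
    (b ω : ℝ → ℝ) (b0 b1 ω0 ω1 : ℝ) (hC : Cond1 b ω b0 b1 ω0 ω1)
    (hω1 : ω1 < Real.pi ^ 2)
    (𝒜 : ℝ → Set Hsp) (hattr : IsPullbackAttractor b ω 𝒜) :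
    ∀ r : ℝ, 0 ≤ r → r < 1 →
      (∀ v ∈ ⋃ t : ℝ, 𝒜 t, MemV2r r v) ∧
      (∃ M : ℝ, ∀ v ∈ ⋃ t : ℝ, 𝒜 t, V2rDistSq r v 0 ≤ ENNReal.ofReal M) ∧
      ∀ f : ℕ → Hsp, (∀ n, f n ∈ ⋃ t : ℝ, 𝒜 t) →
        ∃ a : Hsp, ∃ φ : ℕ → ℕ, StrictMono φ ∧
          Filter.Tendsto (fun n => V2rDistSq r (f (φ n)) a) Filter.atTop (nhds 0) := by
  intro r _ hr
  exact statement12_general hC.abs_b_le hC.abs_ω_le hω1 hattr.invariant hattr.minimal hr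

end
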